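/- arXiv:1910.08771 — 2 statements merged into one kernel-verified Lean document; each statement's English description precedes it below -/
import Mathlib

section
/- There is an absolute constant c > 0 such that the following holds. Let A, B be m×n random matrices with all entries i.i.d. standard Gaussian N(0,1), independent of each other, and let E = [ε_{kl}] be an m×m matrix of i.i.d. Rademacher random variables independent of A and B; set H := m^{−1}A^T E B. Let X = (x_1, …, x_n) ∈ ℝ^{n×n} have s-sparse columns and let r be the number of columns j with |x_j|₁ = max_k |x_k|₁. Then W²(Γ_X; Φ_{A,B}) := (E_H[sup{⟨H, U⟩ : U ∈ D(‖·‖₁, X), ‖U‖_F = 1}])² ≤ 1 + n² − r(n − s·log²(cn²r)). In particular, when r = n, W²(Γ_X; Φ_{A,B}) ≤ 1 + n·s·log²(cn³). -/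
/-!
The bound is weak duality for the descent cone. If `Y` pairs nonpositively with every descent
direction `U`, then `⟨H, U⟩ ≤ ⟨H - Y, U⟩ ≤ ‖H - Y‖_F` whenever `‖U‖_F = 1`, so `W² ≤ E ‖H - Y‖_F²`
(`minner_le`, `width_sq_le`). Take `Y = 0` in the columns whose `l₁`-norm is not maximal. In each
of the `r` maximal columns, for a deterministic level `λ`, put `λ sign(x_ij)` on the support of
`X` and the entry `H_ij` clipped to `[-λ, λ]` off the support; this is `λ` times a subgradient of
the `l₁`-norm, which gives the sign condition (`column_polar`).

Entries of `H` have mean `0` and variance `1`, so the non-maximal columns contribute `n (n - r)`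
and the supports at most `r s (1 + λ²)`. Off the supports only the excess `(|H_ij| - λ)₊²` remains,
and it is controlled by `E exp(± 2/3 H_ij) ≤ 3/2`, uniformly in `m` (`lintegral_entry_exp`).
With `λ = log(c n² r) - 1` and `c = e⁶`, the at most `n r` excess terms sum to at most `1`
(using `r ≤ n`), while `1 + λ² ≤ log²(c n² r)`.

The exponential moment is obtained by conditioning on `E` and on the column `b` of `B`: the entry
is then Gaussian with variance `|m⁻¹ E b|²`, whose coordinates are each `N(0, 1/m)` because the
entries of `E` are `±1`; Jensen's inequality removes the dependence between these coordinates.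
-/

open scoped BigOperators
open scoped Classical

noncomputable section

/-- The l1 norm of the j-th column of X. -/
def colNorm1 {n : ℕ} (X : Matrix (Fin n) (Fin n) ℝ) (j : Fin n) : ℝ := ∑ i, |X i j|

/-- The matrix norm ‖X‖₁ := max_j |x_j|₁. -/
def mnorm1 {n : ℕ} (X : Matrix (Fin n) (Fin n) ℝ) : ℝ := ⨆ j, colNorm1 X j

/-- Trace inner product on matrices. -/
def minner {n : ℕ} (A B : Matrix (Fin n) (Fin n) ℝ) : ℝ := ∑ i, ∑ j, A i j * B i j

/-- Euclidean norm on ℝ^m. -/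
def vnorm2 {m : ℕ} (y : Fin m → ℝ) : ℝ := Real.sqrt (∑ k, (y k)^2)

/-- Frobenius norm. -/
def frob {n : ℕ} (X : Matrix (Fin n) (Fin n) ℝ) : ℝ := Real.sqrt (∑ i, ∑ j, (X i j)^2)

/-- H_S : the matrix agreeing with H on the sparsity pattern S and zero elsewhere. -/
def restrict {n : ℕ} (S : Fin n → Finset (Fin n)) (H : Matrix (Fin n) (Fin n) ℝ) :
    Matrix (Fin n) (Fin n) ℝ := Matrix.of fun i j => if i ∈ S j then H i j else 0

/-- An s-sparsity pattern: S_j ⊆ rows, |S_j| ≤ s for every column j. -/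
def SparsityPattern (n s : ℕ) (S : Fin n → Finset (Fin n)) : Prop := ∀ j, (S j).card ≤ s

/-- Σ_s^{n×n}: every column has at most s nonzero entries. -/
def ColSparse {n : ℕ} (s : ℕ) (X : Matrix (Fin n) (Fin n) ℝ) : Prop :=
  ∀ j, ((Finset.univ : Finset (Fin n)).filter fun i => X i j ≠ 0).card ≤ s

/-- l1-column-flat: all columns have the same l1-norm. -/
def Flat {n : ℕ} (X : Matrix (Fin n) (Fin n) ℝ) : Prop :=
  ∀ j k, colNorm1 X j = colNorm1 X k
open MeasureTheory ProbabilityTheory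

/-- Law of an m×n random matrix (stored row-by-row) with i.i.d. N(0,1) entries. -/
def gaussVec (m n : ℕ) : Measure (Fin m → Fin n → ℝ) :=
  Measure.pi fun _ => Measure.pi fun _ => gaussianReal 0 1

/-- The Rademacher law on ℝ : P[ε = ±1] = 1/2. -/
def radMeasure : Measure ℝ :=
  (1/2 : ENNReal) • Measure.dirac (1 : ℝ) + (1/2 : ENNReal) • Measure.dirac (-1 : ℝ)

/-- Law of an m×m random matrix with i.i.d. Rademacher entries. -/
def radMat (m : ℕ) : Measure (Fin m → Fin m → ℝ) :=
  Measure.pi fun _ => Measure.pi fun _ => radMeasure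

/-- Joint law of the independent triple (A, B, E). -/
def tripleMeasure (m n : ℕ) :
    Measure ((Fin m → Fin n → ℝ) × ((Fin m → Fin n → ℝ) × (Fin m → Fin m → ℝ))) :=
  (gaussVec m n).prod ((gaussVec m n).prod (radMat m))

/-- The descent cone Γ_X = D(‖·‖₁, X). -/
def descCone {n : ℕ} (X : Matrix (Fin n) (Fin n) ℝ) : Set (Matrix (Fin n) (Fin n) ℝ) :=
  {V | ∃ t : ℝ, 0 < t ∧ mnorm1 (X + t • V) ≤ mnorm1 X}

/-- W(Γ_X; Φ_{A,B}) = E_H[sup{⟨H,U⟩ : U ∈ Γ_X, ‖U‖_F = 1}], where H = m⁻¹AᵀEB,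
i.e. H i j = m⁻¹ Σ_{k,l} A_{ki} E_{kl} B_{lj}. -/
def Wwidth {n : ℕ} (m : ℕ) (X : Matrix (Fin n) (Fin n) ℝ) : ℝ :=
  ∫ ω, sSup {c : ℝ | ∃ U ∈ descCone X, frob U = 1 ∧
      c = minner (Matrix.of fun i j =>
            (m : ℝ)⁻¹ * ∑ k, ∑ l, ω.1 k i * ω.2.2 k l * ω.2.1 l j) U}
    ∂(tripleMeasure m n)

/-! ### Gaussian and Rademacher preliminaries -/

/-- Stability of the Gaussian law under linear functionals: `∑ k, a k * w k ∼ N(0, |w|²)`. -/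
lemma map_linear_gauss {m : ℕ} (w : Fin m → ℝ) :
    (Measure.pi fun _ : Fin m => gaussianReal 0 1).map (fun a => ∑ k, a k * w k)
      = gaussianReal 0 (∑ k, w k ^ 2).toNNReal := by
  have hm : Measurable (fun a : Fin m → ℝ => ∑ k, a k * w k) := by fun_prop
  have : IsProbabilityMeasure
      ((Measure.pi fun _ : Fin m => gaussianReal 0 1).map (fun a => ∑ k, a k * w k)) :=
    Measure.isProbabilityMeasure_map hm.aemeasurable
  apply Measure.ext_of_charFun
  funext t
  rw [charFun_apply_real, charFun_gaussianReal, integral_map hm.aemeasurable (by fun_prop)]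
  have h1 : ∀ a : Fin m → ℝ, Complex.exp (t * ((∑ k, a k * w k : ℝ) : ℂ) * Complex.I)
      = ∏ k, Complex.exp (((t * w k : ℝ) : ℂ) * (a k : ℂ) * Complex.I) := by
    intro a
    rw [← Complex.exp_sum]
    congr 1
    push_cast
    rw [Finset.mul_sum, Finset.sum_mul]
    exact Finset.sum_congr rfl fun k _ => by ring
  simp_rw [h1]
  rw [integral_fintype_prod_eq_prod (𝕜 := ℂ)
    (f := fun k (x : ℝ) => Complex.exp (((t * w k : ℝ) : ℂ) * (x : ℂ) * Complex.I))]
  have h2 : ∀ k, ∫ x : ℝ, Complex.exp (((t * w k : ℝ) : ℂ) * (x : ℂ) * Complex.I)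
      ∂(gaussianReal 0 1) = Complex.exp (-((t * w k : ℝ) : ℂ) ^ 2 / 2) := by
    intro k
    rw [← charFun_apply_real, charFun_gaussianReal]
    congr 1
    simp
    ring
  simp_rw [h2]
  rw [← Complex.exp_sum, Real.coe_toNNReal _ (Finset.sum_nonneg fun k _ => sq_nonneg _)]
  congr 1
  push_cast
  rw [Finset.sum_mul, Finset.sum_div]
  simp only [mul_zero, zero_mul, zero_sub]
  rw [← Finset.sum_neg_distrib]
  exact Finset.sum_congr rfl fun k _ => by ring

lemma lintegral_sq_gauss (v : NNReal) :
    ∫⁻ x, ENNReal.ofReal (x ^ 2) ∂(gaussianReal 0 v) = v := by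
  have hi : Integrable (fun x : ℝ => x ^ 2) (gaussianReal 0 v) :=
    (memLp_id_gaussianReal 2).integrable_sq
  rw [← ofReal_integral_eq_lintegral_ofReal hi (ae_of_all _ fun x => sq_nonneg x)]
  have h := variance_fun_id_gaussianReal (μ := 0) (v := v)
  rw [variance_of_integral_eq_zero (by fun_prop) integral_id_gaussianReal] at h
  rw [h, ENNReal.ofReal_coe_nnreal]

lemma lintegral_exp_gauss (v : NNReal) (t : ℝ) :
    ∫⁻ x, ENNReal.ofReal (Real.exp (t * x)) ∂(gaussianReal 0 v)
      = ENNReal.ofReal (Real.exp (v * t ^ 2 / 2)) := by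
  rw [← ofReal_integral_eq_lintegral_ofReal (integrable_exp_mul_gaussianReal t)
    (ae_of_all _ fun x => (Real.exp_pos _).le)]
  have h := congrFun (mgf_fun_id_gaussianReal (μ := 0) (v := v)) t
  simp only [mgf, zero_mul, zero_add] at h
  rw [h]

/-- If `g ∼ N(0, v)` then `E exp((2/3)² g² / (2v)) = (1 - 4/9)^(-1/2) = √(9/5) ≤ 3/2`. -/
lemma lintegral_exp_sq_gauss (v : NNReal) (hv : v ≠ 0) :
    ∫⁻ x, ENNReal.ofReal (Real.exp ((2 / 9) * (x ^ 2 / v))) ∂(gaussianReal 0 v)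
      ≤ ENNReal.ofReal (3 / 2) := by
  have hv' : (0 : ℝ) < v := by positivity
  rw [gaussianReal_of_var_ne_zero _ hv,
    lintegral_withDensity_eq_lintegral_mul _ (measurable_gaussianPDF 0 v) (by fun_prop)]
  have hb : (0 : ℝ) < 5 / (18 * v) := by positivity
  have h1 : ∀ x : ℝ, (gaussianPDF 0 v * fun x => ENNReal.ofReal (Real.exp ((2 / 9) * (x ^ 2 / v)))) x
      = ENNReal.ofReal ((√(2 * Real.pi * v))⁻¹ * Real.exp (-(5 / (18 * v)) * x ^ 2)) := by
    intro x
    simp only [Pi.mul_apply, gaussianPDF, gaussianPDFReal]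
    rw [← ENNReal.ofReal_mul (by positivity), mul_assoc, ← Real.exp_add]
    congr 3
    field_simp
    ring
  simp_rw [h1]
  rw [← ofReal_integral_eq_lintegral_ofReal ((integrable_exp_neg_mul_sq hb).const_mul _)
    (ae_of_all _ fun x => by positivity), integral_const_mul, integral_gaussian]
  apply ENNReal.ofReal_le_ofReal
  rw [← Real.sqrt_inv, ← Real.sqrt_mul (by positivity), Real.sqrt_le_left (by norm_num)]
  have : (2 * Real.pi * v)⁻¹ * (Real.pi / (5 / (18 * v))) = 9 / 5 := by
    have := Real.pi_pos
    field_simp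
    norm_num
  rw [this]
  norm_num

lemma radMeasure_isProb : IsProbabilityMeasure radMeasure := by
  constructor
  simp [radMeasure, ENNReal.inv_two_add_inv_two]

lemma radMat_ae (m : ℕ) : ∀ᵐ e ∂(radMat m), ∀ k l, e k l ^ 2 = 1 := by
  have := radMeasure_isProb
  have h0 : ∀ᵐ x ∂radMeasure, x ^ 2 = 1 := by
    simp only [radMeasure, ae_add_measure_iff]
    constructor <;>
    · apply Measure.ae_smul_measure
      rw [ae_dirac_iff (measurableSet_eq_fun (by fun_prop) (by fun_prop))]
      norm_num
  rw [ae_all_iff]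
  intro k
  rw [ae_all_iff]
  intro l
  have h1 : ∀ᵐ y ∂(Measure.pi fun _ : Fin m => radMeasure), y l ^ 2 = 1 :=
    (Measure.quasiMeasurePreserving_eval (fun _ : Fin m => radMeasure) l).ae h0
  exact (Measure.quasiMeasurePreserving_eval
    (fun _ : Fin m => Measure.pi fun _ : Fin m => radMeasure) k).ae h1

lemma col_preserving (m n : ℕ) (i : Fin n) :
    MeasurePreserving (fun (a : Fin m → Fin n → ℝ) k => a k i) (gaussVec m n)
      (Measure.pi fun _ : Fin m => gaussianReal 0 1) :=
  measurePreserving_pi _ _ fun _ => measurePreserving_eval (fun _ : Fin n => gaussianReal 0 1) i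

/-! ### Moments of the entries of H -/

/-- The entry `H i j` of `H = m⁻¹ Aᵀ E B` as a function of `ω = (A, B, E)`. -/
def entry {m n : ℕ} (i j : Fin n)
    (ω : (Fin m → Fin n → ℝ) × ((Fin m → Fin n → ℝ) × (Fin m → Fin m → ℝ))) : ℝ :=
  (m : ℝ)⁻¹ * ∑ k, ∑ l, ω.1 k i * ω.2.2 k l * ω.2.1 l j

lemma measurable_entry {m n : ℕ} (i j : Fin n) : Measurable (entry (m := m) i j) := by
  unfold entry
  fun_prop

/-- The `k`-th coordinate of `m⁻¹ E b`. -/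
def rowForm {m : ℕ} (e : Fin m → Fin m → ℝ) (k : Fin m) (b : Fin m → ℝ) : ℝ :=
  ∑ l, b l * ((m : ℝ)⁻¹ * e k l)

lemma tripleMeasure_isProb (m n : ℕ) : IsProbabilityMeasure (tripleMeasure m n) := by
  have := radMeasure_isProb
  unfold tripleMeasure gaussVec radMat
  infer_instance

/-- Conditionally on `(b, E)`, where `b` is the `j`-th column of `B`, the entry `H i j` is centred
Gaussian with variance `|m⁻¹ E b|²`. -/
lemma lintegral_entry {m n : ℕ} (i j : Fin n) (F : ℝ → ENNReal) (hF : Measurable F) :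
    ∫⁻ ω, F (entry i j ω) ∂(tripleMeasure m n)
      = ∫⁻ e, ∫⁻ b, ∫⁻ x, F x ∂(gaussianReal 0 (∑ k, rowForm e k b ^ 2).toNNReal)
          ∂(Measure.pi fun _ : Fin m => gaussianReal 0 1) ∂(radMat m) := by
  have := radMeasure_isProb
  have : IsProbabilityMeasure (radMat m) := by unfold radMat; infer_instance
  have : IsProbabilityMeasure (gaussVec m n) := by unfold gaussVec; infer_instance
  have hmp := (col_preserving m n i).prod
    ((col_preserving m n j).prod (MeasurePreserving.id (radMat m)))
  let h : (Fin m → ℝ) × ((Fin m → ℝ) × (Fin m → Fin m → ℝ)) → ℝ :=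
    fun p => ∑ k, p.1 k * rowForm p.2.2 k p.2.1
  have hh : Measurable h := by
    simp only [h, rowForm]
    fun_prop
  have he : ∀ ω : (Fin m → Fin n → ℝ) × ((Fin m → Fin n → ℝ) × (Fin m → Fin m → ℝ)),
      F (entry i j ω) = (F ∘ h) (Prod.map (fun (a : Fin m → Fin n → ℝ) k => a k i)
        (Prod.map (fun (a : Fin m → Fin n → ℝ) k => a k j) id) ω) := by
    intro ω
    simp only [entry, h, rowForm, Function.comp, Prod.map, id]
    congr 1
    rw [Finset.mul_sum]
    refine Finset.sum_congr rfl fun k _ => ?_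
    rw [Finset.mul_sum, Finset.mul_sum]
    exact Finset.sum_congr rfl fun l _ => by ring
  simp_rw [he]
  unfold tripleMeasure
  rw [hmp.lintegral_comp (hF.comp hh), lintegral_prod_symm' _ (hF.comp hh)]
  have hin : ∀ y : (Fin m → ℝ) × (Fin m → Fin m → ℝ),
      ∫⁻ a, (F ∘ h) (a, y) ∂(Measure.pi fun _ : Fin m => gaussianReal 0 1)
        = ∫⁻ x, F x ∂(gaussianReal 0 (∑ k, rowForm y.2 k y.1 ^ 2).toNNReal) := by
    intro y
    rw [← map_linear_gauss, lintegral_map hF (by fun_prop)]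
    rfl
  have hmeas : Measurable fun y : (Fin m → ℝ) × (Fin m → Fin m → ℝ) =>
      ∫⁻ a, (F ∘ h) (a, y) ∂(Measure.pi fun _ : Fin m => gaussianReal 0 1) :=
    (hF.comp hh).lintegral_prod_left'
  rw [lintegral_prod_symm' _ hmeas]
  simp_rw [hin]

lemma map_rowForm {m : ℕ} (hm : 0 < m) (e : Fin m → Fin m → ℝ) (he : ∀ k l, e k l ^ 2 = 1)
    (k : Fin m) :
    (Measure.pi fun _ : Fin m => gaussianReal 0 1).map (rowForm e k)
      = gaussianReal 0 (m : NNReal)⁻¹ := by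
  have h := map_linear_gauss (fun l => (m : ℝ)⁻¹ * e k l)
  unfold rowForm
  rw [h]
  congr 1
  have hm' : (m : ℝ) ≠ 0 := by positivity
  have : ∑ l, ((m : ℝ)⁻¹ * e k l) ^ 2 = (((m : NNReal)⁻¹ : NNReal) : ℝ) := by
    simp only [mul_pow, he]
    simp
    field_simp
  rw [this, Real.toNNReal_coe]

lemma measurable_rowForm {m : ℕ} (e : Fin m → Fin m → ℝ) (k : Fin m) :
    Measurable (rowForm e k) := by
  unfold rowForm
  fun_prop

lemma lintegral_entry_sq {m n : ℕ} (hm : 0 < m) (i j : Fin n) :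
    ∫⁻ ω, ENNReal.ofReal (entry i j ω ^ 2) ∂(tripleMeasure m n) = 1 := by
  have := radMeasure_isProb
  have : IsProbabilityMeasure (radMat m) := by unfold radMat; infer_instance
  rw [lintegral_entry i j (fun x => ENNReal.ofReal (x ^ 2)) (by fun_prop)]
  have : ∀ᵐ e ∂(radMat m),
      ∫⁻ b, ∫⁻ x, ENNReal.ofReal (x ^ 2) ∂(gaussianReal 0 (∑ k, rowForm e k b ^ 2).toNNReal)
          ∂(Measure.pi fun _ : Fin m => gaussianReal 0 1) = 1 := by
    filter_upwards [radMat_ae m] with e he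
    simp_rw [lintegral_sq_gauss]
    have h1 : ∀ b, (((∑ k, rowForm e k b ^ 2).toNNReal : NNReal) : ENNReal)
        = ∑ k, ENNReal.ofReal (rowForm e k b ^ 2) := fun b =>
      ENNReal.ofReal_sum_of_nonneg fun k _ => sq_nonneg _
    simp_rw [h1]
    rw [lintegral_finsetSum _ fun k _ => ((measurable_rowForm e k).pow_const 2).ennreal_ofReal]
    have h2 : ∀ k, ∫⁻ b, ENNReal.ofReal (rowForm e k b ^ 2)
        ∂(Measure.pi fun _ : Fin m => gaussianReal 0 1) = ((m : NNReal)⁻¹ : NNReal) := by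
      intro k
      rw [← lintegral_sq_gauss, ← map_rowForm hm e he k,
        lintegral_map (by fun_prop) (measurable_rowForm e k)]
    simp_rw [h2]
    rw [Finset.sum_const, Finset.card_univ, Fintype.card_fin, nsmul_eq_mul,
      ENNReal.coe_inv (by positivity)]
    exact ENNReal.mul_inv_cancel (by positivity) (by simp)
  rw [lintegral_congr_ae this]
  simp

/-- The exponential moment of an entry at `±2/3`, uniformly in `m`. Integrating out `A` leaves
`exp ((2/9) ∑ k, w k ^ 2)` with each `w k ∼ N(0, 1/m)`, and Jensen's inequality for the average of
the `m * w k ^ 2` reduces this to a single standard Gaussian. -/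
lemma lintegral_entry_exp {m n : ℕ} (hm : 0 < m) (i j : Fin n) (t : ℝ) (ht : t ^ 2 = 4 / 9) :
    ∫⁻ ω, ENNReal.ofReal (Real.exp (t * entry i j ω)) ∂(tripleMeasure m n)
      ≤ ENNReal.ofReal (3 / 2) := by
  have := radMeasure_isProb
  have : IsProbabilityMeasure (radMat m) := by unfold radMat; infer_instance
  have hm' : (m : ℝ) ≠ 0 := by positivity
  rw [lintegral_entry i j (fun x => ENNReal.ofReal (Real.exp (t * x))) (by fun_prop)]
  have : ∀ᵐ e ∂(radMat m),
      ∫⁻ b, ∫⁻ x, ENNReal.ofReal (Real.exp (t * x))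
          ∂(gaussianReal 0 (∑ k, rowForm e k b ^ 2).toNNReal)
          ∂(Measure.pi fun _ : Fin m => gaussianReal 0 1) ≤ ENNReal.ofReal (3 / 2) := by
    filter_upwards [radMat_ae m] with e he
    simp_rw [lintegral_exp_gauss]
    have hc : ((((m : NNReal)⁻¹ : NNReal)) : ℝ) = (m : ℝ)⁻¹ := by simp
    have h1 : ∀ b, ENNReal.ofReal (Real.exp (((∑ k, rowForm e k b ^ 2).toNNReal : ℝ) * t ^ 2 / 2))
        ≤ ∑ k, ENNReal.ofReal (m : ℝ)⁻¹ * ENNReal.ofReal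
          (Real.exp ((2 / 9) * (rowForm e k b ^ 2 / (((m : NNReal)⁻¹ : NNReal) : ℝ)))) := by
      intro b
      have hj := convexOn_exp.map_sum_le (t := Finset.univ) (w := fun _ : Fin m => (m : ℝ)⁻¹)
        (p := fun k => (2 / 9) * (rowForm e k b ^ 2 / (m : ℝ)⁻¹))
        (fun _ _ => by positivity) (by simp [hm']) (fun _ _ => Set.mem_univ _)
      simp only [smul_eq_mul] at hj
      simp_rw [← ENNReal.ofReal_mul (inv_nonneg.2 (Nat.cast_nonneg m)), hc]
      rw [← ENNReal.ofReal_sum_of_nonneg fun k _ => by positivity]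
      apply ENNReal.ofReal_le_ofReal
      refine le_trans (le_of_eq ?_) hj
      rw [Real.coe_toNNReal _ (Finset.sum_nonneg fun k _ => sq_nonneg _), ht, Finset.sum_mul,
        Finset.sum_div]
      congr 1
      refine Finset.sum_congr rfl fun k _ => ?_
      field_simp
      ring
    refine (lintegral_mono h1).trans ?_
    have hmeas : ∀ k, Measurable fun b => ENNReal.ofReal
        (Real.exp ((2 / 9) * (rowForm e k b ^ 2 / (((m : NNReal)⁻¹ : NNReal) : ℝ)))) := by
      intro k
      have := measurable_rowForm e k
      fun_prop
    rw [lintegral_finsetSum _ fun k _ => (hmeas k).const_mul _]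
    have h2 : ∀ k, ∫⁻ b, ENNReal.ofReal (m : ℝ)⁻¹ * ENNReal.ofReal
          (Real.exp ((2 / 9) * (rowForm e k b ^ 2 / (((m : NNReal)⁻¹ : NNReal) : ℝ))))
        ∂(Measure.pi fun _ : Fin m => gaussianReal 0 1)
          ≤ ENNReal.ofReal (m : ℝ)⁻¹ * ENNReal.ofReal (3 / 2) := by
      intro k
      rw [lintegral_const_mul _ (hmeas k)]
      gcongr
      refine le_trans (le_of_eq ?_) (lintegral_exp_sq_gauss (m : NNReal)⁻¹ (by positivity))
      rw [← map_rowForm hm e he k, lintegral_map (by fun_prop) (measurable_rowForm e k)]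
    refine (Finset.sum_le_sum fun k _ => h2 k).trans (le_of_eq ?_)
    rw [Finset.sum_const, Finset.card_univ, Fintype.card_fin, nsmul_eq_mul,
      ← ENNReal.ofReal_mul (by positivity), ← ENNReal.ofReal_natCast,
      ← ENNReal.ofReal_mul (by positivity)]
    congr 1
    field_simp
  refine (lintegral_mono_ae this).trans ?_
  simp

lemma integrable_entry_sq {m n : ℕ} (hm : 0 < m) (i j : Fin n) :
    Integrable (fun ω => entry i j ω ^ 2) (tripleMeasure m n) := by
  refine ⟨((measurable_entry i j).pow_const 2).aestronglyMeasurable, ?_⟩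
  rw [hasFiniteIntegral_iff_ofReal (ae_of_all _ fun ω => sq_nonneg _), lintegral_entry_sq hm]
  simp

lemma integral_entry_sq {m n : ℕ} (hm : 0 < m) (i j : Fin n) :
    ∫ ω, entry i j ω ^ 2 ∂(tripleMeasure m n) = 1 := by
  rw [integral_eq_lintegral_of_nonneg_ae (ae_of_all _ fun ω => sq_nonneg _)
    ((measurable_entry i j).pow_const 2).aestronglyMeasurable, lintegral_entry_sq hm]
  simp

lemma integrable_entry {m n : ℕ} (hm : 0 < m) (i j : Fin n) :
    Integrable (entry i j) (tripleMeasure m n) := by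
  have := tripleMeasure_isProb m n
  exact ((memLp_two_iff_integrable_sq (measurable_entry i j).aestronglyMeasurable).2
    (integrable_entry_sq hm i j)).integrable (by norm_num)

lemma integral_entry {m n : ℕ} (hm : 0 < m) (i j : Fin n) :
    ∫ ω, entry i j ω ∂(tripleMeasure m n) = 0 := by
  rw [integral_eq_lintegral_pos_part_sub_lintegral_neg_part (integrable_entry hm i j),
    lintegral_entry i j (fun x => ENNReal.ofReal x) (by fun_prop),
    lintegral_entry i j (fun x => ENNReal.ofReal (-x)) (by fun_prop)]
  have : ∀ v : NNReal, ∫⁻ x, ENNReal.ofReal (-x) ∂(gaussianReal 0 v)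
      = ∫⁻ x, ENNReal.ofReal x ∂(gaussianReal 0 v) := by
    intro v
    have h := gaussianReal_map_neg (μ := 0) (v := v)
    rw [neg_zero] at h
    conv_rhs => rw [← h, lintegral_map (by fun_prop) (by fun_prop)]
  simp_rw [this]
  simp

lemma integrable_entry_exp {m n : ℕ} (hm : 0 < m) (i j : Fin n) (t : ℝ) (ht : t ^ 2 = 4 / 9) :
    Integrable (fun ω => Real.exp (t * entry i j ω)) (tripleMeasure m n) := by
  have := measurable_entry (m := m) i j
  refine ⟨by fun_prop, ?_⟩
  rw [hasFiniteIntegral_iff_ofReal (ae_of_all _ fun ω => (Real.exp_pos _).le)]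
  exact (lintegral_entry_exp hm i j t ht).trans_lt ENNReal.ofReal_lt_top

lemma integral_entry_exp {m n : ℕ} (hm : 0 < m) (i j : Fin n) (t : ℝ) (ht : t ^ 2 = 4 / 9) :
    ∫ ω, Real.exp (t * entry i j ω) ∂(tripleMeasure m n) ≤ 3 / 2 := by
  have := measurable_entry (m := m) i j
  rw [integral_eq_lintegral_of_nonneg_ae (ae_of_all _ fun ω => (Real.exp_pos _).le) (by fun_prop)]
  exact ENNReal.toReal_le_of_le_ofReal (by norm_num) (lintegral_entry_exp hm i j t ht)

/-! ### Duality and the width bound -/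

/-- Entrywise choice of a multiple `Y` of a subgradient of the `l₁`-norm: `λ sign x` on the support
of `x`, and `h` clipped to `[-λ, λ]` off the support. -/
def subgradEntry (lam x h : ℝ) : ℝ :=
  if x ≠ 0 then lam * SignType.sign x else max (-lam) (min lam h)

lemma abs_subgradEntry_le {lam : ℝ} (hl : 0 ≤ lam) (x h : ℝ) : |subgradEntry lam x h| ≤ lam := by
  unfold subgradEntry
  split_ifs with hx
  · rcases lt_or_gt_of_ne hx with h0 | h0 <;> simp [h0, abs_of_nonneg hl]
  · rw [abs_le]
    exact ⟨le_max_left _ _, max_le (by linarith) (min_le_left _ _)⟩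

lemma subgradEntry_mul_self (lam x h : ℝ) : subgradEntry lam x h * x = lam * |x| := by
  unfold subgradEntry
  split_ifs with hx
  · rw [mul_assoc, sign_mul_self]
  · simp [not_not.1 hx]

/-- A column carrying the maximal `l₁`-norm cannot grow along a descent direction, so the direction
pairs nonpositively with (a multiple of) a subgradient there. -/
lemma column_polar {n : ℕ} (X V : Matrix (Fin n) (Fin n) ℝ) (hV : V ∈ descCone X) (j : Fin n)
    (hj : colNorm1 X j = mnorm1 X) {lam : ℝ} (hl : 0 ≤ lam) (h : Fin n → ℝ) :
    ∑ i, subgradEntry lam (X i j) (h i) * V i j ≤ 0 := by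
  obtain ⟨t, ht, hle⟩ := hV
  have h1 : colNorm1 (X + t • V) j ≤ colNorm1 X j := by
    rw [hj]
    exact (le_ciSup (Set.finite_range _).bddAbove j).trans hle
  have h2 : ∀ i, lam * |X i j| + t * (subgradEntry lam (X i j) (h i) * V i j)
      ≤ lam * |(X + t • V) i j| := by
    intro i
    rw [← subgradEntry_mul_self lam (X i j) (h i)]
    calc _ = subgradEntry lam (X i j) (h i) * (X + t • V) i j := by
          simp [Matrix.add_apply, Matrix.smul_apply]; ring
      _ ≤ |subgradEntry lam (X i j) (h i) * (X + t • V) i j| := le_abs_self _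
      _ ≤ _ := by
          rw [abs_mul]
          exact mul_le_mul_of_nonneg_right (abs_subgradEntry_le hl _ _) (abs_nonneg _)
  have h3 := Finset.sum_le_sum fun i (_ : i ∈ Finset.univ) => h2 i
  rw [Finset.sum_add_distrib, ← Finset.mul_sum, ← Finset.mul_sum, ← Finset.mul_sum] at h3
  have h4 : lam * ∑ i, |(X + t • V) i j| ≤ lam * ∑ i, |X i j| :=
    mul_le_mul_of_nonneg_left h1 hl
  by_contra hc
  push Not at hc
  have := mul_pos ht hc
  linarith

/-- Soft-threshold excess of `h` over level `λ`, dominated by exponential moments. -/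
lemma clip_sq_le {lam : ℝ} (hl : 0 ≤ lam) (h : ℝ) :
    (h - max (-lam) (min lam h)) ^ 2
      ≤ 9 / 2 * Real.exp (-(2 / 3) * lam)
        * (Real.exp (2 / 3 * h) + Real.exp (-(2 / 3) * h)) := by
  have key : ∀ y : ℝ, 0 ≤ y → y ^ 2 ≤ 9 / 2 * Real.exp (2 / 3 * y) := by
    intro y hy
    have := Real.quadratic_le_exp_of_nonneg (x := 2 / 3 * y) (by positivity)
    nlinarith
  have e1 := Real.exp_pos (2 / 3 * h)
  have e2 := Real.exp_pos (-(2 / 3) * h)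
  have e3 := Real.exp_pos (-(2 / 3) * lam)
  rcases le_total h lam with h1 | h1
  · rcases le_total (-lam) h with h2 | h2
    · rw [min_eq_right h1, max_eq_right h2]
      have : 0 ≤ 9 / 2 * Real.exp (-(2 / 3) * lam)
          * (Real.exp (2 / 3 * h) + Real.exp (-(2 / 3) * h)) := by positivity
      simpa using this
    · rw [min_eq_right h1, max_eq_left h2]
      have h3 := key (-h - lam) (by linarith)
      have h4 : Real.exp (2 / 3 * (-h - lam))
          = Real.exp (-(2 / 3) * lam) * Real.exp (-(2 / 3) * h) := by
        rw [← Real.exp_add]; ring_nf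
      rw [h4] at h3
      have := mul_pos e3 e1
      nlinarith
  · rw [min_eq_left h1, max_eq_right (by linarith)]
    have h3 := key (h - lam) (by linarith)
    have h4 : Real.exp (2 / 3 * (h - lam))
        = Real.exp (-(2 / 3) * lam) * Real.exp (2 / 3 * h) := by
      rw [← Real.exp_add]; ring_nf
    rw [h4] at h3
    have := mul_pos e3 e2
    nlinarith

/-- Upper bound for the squared `(i, j)` entry of `H - Y`, where `Y` is zero in the columns that
are not maximal and is given by `subgradEntry` in the maximal ones. -/
def resid {n : ℕ} (X : Matrix (Fin n) (Fin n) ℝ) (lam : ℝ) (i j : Fin n) (h : ℝ) : ℝ :=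
  if colNorm1 X j = mnorm1 X then
    if X i j ≠ 0 then (h - lam * SignType.sign (X i j)) ^ 2
    else 9 / 2 * Real.exp (-(2 / 3) * lam)
      * (Real.exp (2 / 3 * h) + Real.exp (-(2 / 3) * h))
  else h ^ 2

/-- Weak duality: since `⟨Y, U⟩ ≤ 0` and `‖U‖_F = 1`, Young's inequality gives
`⟨H, U⟩ ≤ ⟨H - Y, U⟩ ≤ (‖H - Y‖_F² / K + K) / 2`. -/
lemma minner_le {n : ℕ} (X U H : Matrix (Fin n) (Fin n) ℝ) (hU : U ∈ descCone X)
    (hf : frob U = 1) {lam K : ℝ} (hl : 0 ≤ lam) (hK : 0 < K) :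
    minner H U ≤ ((∑ i, ∑ j, resid X lam i j (H i j)) / K + K) / 2 := by
  let Y : Fin n → Fin n → ℝ := fun i j =>
    if colNorm1 X j = mnorm1 X then subgradEntry lam (X i j) (H i j) else 0
  have hY : ∑ i, ∑ j, Y i j * U i j ≤ 0 := by
    rw [Finset.sum_comm]
    refine Finset.sum_nonpos fun j _ => ?_
    by_cases hj : colNorm1 X j = mnorm1 X
    · simp only [Y, hj, if_true]
      exact column_polar X U hU j hj hl fun i => H i j
    · simp [Y, hj]
  have hU2 : ∑ i, ∑ j, U i j ^ 2 = 1 := by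
    unfold frob at hf
    rwa [Real.sqrt_eq_one] at hf
  have hres : ∀ i j, (H i j - Y i j) ^ 2 ≤ resid X lam i j (H i j) := by
    intro i j
    unfold resid
    simp only [Y, subgradEntry]
    split_ifs with h1 h2
    · exact le_rfl
    · exact clip_sq_le hl _
    · simp
  have hyoung : ∀ i j, H i j * U i j
      ≤ Y i j * U i j + (resid X lam i j (H i j) / K + K * U i j ^ 2) / 2 := by
    intro i j
    have h1 : (H i j - Y i j) * U i j ≤ ((H i j - Y i j) ^ 2 / K + K * U i j ^ 2) / 2 := by
      have : 0 ≤ ((H i j - Y i j) - K * U i j) ^ 2 / K := by positivity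
      have h2 : ((H i j - Y i j) - K * U i j) ^ 2 / K
          = (H i j - Y i j) ^ 2 / K + K * U i j ^ 2 - 2 * ((H i j - Y i j) * U i j) := by
        field_simp
        ring
      linarith
    have h3 := div_le_div_of_nonneg_right (hres i j) hK.le
    linarith
  calc minner H U ≤ ∑ i, ∑ j, (Y i j * U i j
        + (resid X lam i j (H i j) / K + K * U i j ^ 2) / 2) :=
        Finset.sum_le_sum fun i _ => Finset.sum_le_sum fun j _ => hyoung i j
    _ = (∑ i, ∑ j, Y i j * U i j) + ((∑ i, ∑ j, resid X lam i j (H i j)) / K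
          + K * ∑ i, ∑ j, U i j ^ 2) / 2 := by
        simp only [Finset.sum_add_distrib, ← Finset.sum_div, ← Finset.mul_sum]
    _ ≤ _ := by rw [hU2]; linarith

/-- The value of `E (resid X lam i j (H i j))`, with exponential moments replaced by their bound. -/
def residMean {n : ℕ} (X : Matrix (Fin n) (Fin n) ℝ) (lam : ℝ) (i j : Fin n) : ℝ :=
  if colNorm1 X j = mnorm1 X then
    if X i j ≠ 0 then 1 + lam ^ 2 else 27 / 2 * Real.exp (-(2 / 3) * lam)
  else 1

lemma integrable_resid {m n : ℕ} (hm : 0 < m) (X : Matrix (Fin n) (Fin n) ℝ) (lam : ℝ)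
    (i j : Fin n) :
    Integrable (fun ω => resid X lam i j (entry i j ω)) (tripleMeasure m n) := by
  have := tripleMeasure_isProb m n
  unfold resid
  split_ifs with h1 h2
  · simp only [sub_sq]
    exact ((integrable_entry_sq hm i j).sub
      (((integrable_entry hm i j).const_mul 2).mul_const _)).add (integrable_const _)
  · exact ((integrable_entry_exp hm i j _ (by norm_num)).add
      (integrable_entry_exp hm i j _ (by norm_num))).const_mul _
  · exact integrable_entry_sq hm i j

lemma integral_resid_le {m n : ℕ} (hm : 0 < m) (X : Matrix (Fin n) (Fin n) ℝ) (lam : ℝ)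
    (i j : Fin n) :
    ∫ ω, resid X lam i j (entry i j ω) ∂(tripleMeasure m n) ≤ residMean X lam i j := by
  have := tripleMeasure_isProb m n
  unfold resid residMean
  split_ifs with h1 h2
  · simp only [sub_sq]
    have hs : ((SignType.sign (X i j) : SignType) : ℝ) ^ 2 = 1 := by
      rcases lt_or_gt_of_ne h2 with h0 | h0 <;> simp [h0]
    have i1 := integrable_entry_sq hm i j
    have i2 := ((integrable_entry hm i j).const_mul 2).mul_const (lam * SignType.sign (X i j))
    have e1 : ∫ ω, (entry i j ω ^ 2 - 2 * entry i j ω * (lam * SignType.sign (X i j))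
        + (lam * SignType.sign (X i j)) ^ 2) ∂(tripleMeasure m n)
        = 1 + lam ^ 2 := by
      have i12 : Integrable (fun ω => entry i j ω ^ 2
          - 2 * entry i j ω * (lam * SignType.sign (X i j))) (tripleMeasure m n) := i1.sub i2
      rw [integral_add i12 (integrable_const _), integral_sub i1 i2,
        integral_entry_sq hm, integral_mul_const, integral_const_mul, integral_entry hm]
      simp [mul_pow, hs]
    exact e1.le
  · rw [integral_const_mul, integral_add (integrable_entry_exp hm i j _ (by norm_num))
      (integrable_entry_exp hm i j _ (by norm_num))]
    have a1 := integral_entry_exp hm i j (2 / 3) (by norm_num)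
    have a2 := integral_entry_exp hm i j (-(2 / 3)) (by norm_num)
    have := Real.exp_pos (-(2 / 3) * lam)
    nlinarith
  · exact (integral_entry_sq hm i j).le

lemma sum_residMean_le {n s r : ℕ} (X : Matrix (Fin n) (Fin n) ℝ) (hX : ColSparse s X)
    (hr : r = ((Finset.univ : Finset (Fin n)).filter fun j => colNorm1 X j = mnorm1 X).card)
    (lam : ℝ) :
    ∑ i, ∑ j, residMean X lam i j
      ≤ (n : ℝ) ^ 2 - r * n + r * s * (1 + lam ^ 2)
        + n * r * (27 / 2 * Real.exp (-(2 / 3) * lam)) := by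
  rw [Finset.sum_comm]
  set q := 27 / 2 * Real.exp (-(2 / 3) * lam) with hq
  have hq0 : 0 ≤ q := by positivity
  have hcol : ∀ j, ∑ i, residMean X lam i j
      ≤ n + if colNorm1 X j = mnorm1 X then s * (1 + lam ^ 2) + n * q - n else 0 := by
    intro j
    by_cases hj : colNorm1 X j = mnorm1 X
    · simp only [residMean, hj, if_true]
      have h1 : ∀ i, (if X i j ≠ 0 then 1 + lam ^ 2 else q)
          ≤ (if X i j ≠ 0 then 1 + lam ^ 2 else 0) + q := by
        intro i
        split_ifs <;> linarith
      have h2 := Finset.sum_le_sum fun i (_ : i ∈ Finset.univ) => h1 i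
      rw [Finset.sum_add_distrib, ← Finset.sum_filter, Finset.sum_const, Finset.sum_const,
        Finset.card_univ, Fintype.card_fin, nsmul_eq_mul, nsmul_eq_mul] at h2
      have h3 : ((((Finset.univ : Finset (Fin n)).filter fun i => X i j ≠ 0).card : ℕ) : ℝ)
          * (1 + lam ^ 2) ≤ s * (1 + lam ^ 2) := by
        have : ((((Finset.univ : Finset (Fin n)).filter fun i => X i j ≠ 0).card : ℕ) : ℝ) ≤ s := by
          exact_mod_cast hX j
        gcongr
      linarith
    · simp [residMean, hj]
  refine (Finset.sum_le_sum fun j _ => hcol j).trans (le_of_eq ?_)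
  rw [Finset.sum_add_distrib, ← Finset.sum_filter, Finset.sum_const, Finset.sum_const, ← hr,
    Finset.card_univ, Fintype.card_fin, nsmul_eq_mul, nsmul_eq_mul]
  ring

/-- Any upper bound `K²` for `E ‖H - Y‖_F²` bounds the squared width. -/
lemma width_sq_le {m n : ℕ} (hm : 0 < m) (X : Matrix (Fin n) (Fin n) ℝ) {lam K : ℝ}
    (hl : 0 ≤ lam) (hK : 0 < K) (hsum : ∑ i, ∑ j, residMean X lam i j ≤ K ^ 2) :
    Wwidth m X ^ 2 ≤ K ^ 2 := by
  have := tripleMeasure_isProb m n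
  let H : (Fin m → Fin n → ℝ) × ((Fin m → Fin n → ℝ) × (Fin m → Fin m → ℝ)) →
    Matrix (Fin n) (Fin n) ℝ := fun ω => Matrix.of fun i j => entry i j ω
  let S : (Fin m → Fin n → ℝ) × ((Fin m → Fin n → ℝ) × (Fin m → Fin m → ℝ)) → Set ℝ :=
    fun ω => {c : ℝ | ∃ U ∈ descCone X, frob U = 1 ∧ c = minner (H ω) U}
  have hW : Wwidth m X = ∫ ω, sSup (S ω) ∂(tripleMeasure m n) := rfl
  rw [hW]
  have hub : ∀ ω, ∀ c ∈ S ω, c ≤ ((∑ i, ∑ j, resid X lam i j (entry i j ω)) / K + K) / 2 := by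
    rintro ω c ⟨U, hU, hf, rfl⟩
    exact minner_le X U (H ω) hU hf hl hK
  -- `Wwidth` is the junk value `0` when the integrand is not integrable.
  by_cases hint : Integrable (fun ω => sSup (S ω)) (tripleMeasure m n)
  swap
  · rw [integral_undef hint, zero_pow two_ne_zero]
    exact sq_nonneg K
  by_cases hne : ∃ U ∈ descCone X, frob U = 1
  swap
  · have : ∀ ω, S ω = ∅ := by
      intro ω
      ext c
      refine iff_of_false ?_ (Set.notMem_empty c)
      rintro ⟨U, hU, hf, _⟩
      exact hne ⟨U, hU, hf⟩
    simp only [this, Real.sSup_empty, integral_zero]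
    rw [zero_pow two_ne_zero]
    exact sq_nonneg K
  obtain ⟨U, hU, hf⟩ := hne
  have hmem : ∀ ω, minner (H ω) U ∈ S ω := fun ω => ⟨U, hU, hf, rfl⟩
  have hlow : 0 ≤ ∫ ω, sSup (S ω) ∂(tripleMeasure m n) := by
    have hi : ∀ i j, Integrable (fun ω => entry i j ω * U i j) (tripleMeasure m n) :=
      fun i j => (integrable_entry hm i j).mul_const _
    have hi2 : ∀ i, Integrable (fun ω => ∑ j, entry i j ω * U i j) (tripleMeasure m n) :=
      fun i => integrable_finsetSum _ fun j _ => hi i j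
    have h0 : ∫ ω, minner (H ω) U ∂(tripleMeasure m n) = 0 := by
      simp only [minner, H, Matrix.of_apply]
      rw [integral_finsetSum _ fun i _ => hi2 i]
      refine Finset.sum_eq_zero fun i _ => ?_
      rw [integral_finsetSum _ fun j _ => hi i j]
      refine Finset.sum_eq_zero fun j _ => ?_
      rw [integral_mul_const, integral_entry hm, zero_mul]
    rw [← h0]
    refine integral_mono ?_ hint fun ω => le_csSup ⟨_, hub ω⟩ (hmem ω)
    exact integrable_finsetSum _ fun i _ => hi2 i
  have hri : ∀ i, Integrable (fun ω => ∑ j, resid X lam i j (entry i j ω)) (tripleMeasure m n) :=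
    fun i => integrable_finsetSum _ fun j _ => integrable_resid hm X lam i j
  have hrI : Integrable (fun ω => ∑ i, ∑ j, resid X lam i j (entry i j ω)) (tripleMeasure m n) :=
    integrable_finsetSum _ fun i _ => hri i
  have hsumI : ∫ ω, ∑ i, ∑ j, resid X lam i j (entry i j ω) ∂(tripleMeasure m n) ≤ K ^ 2 := by
    refine le_trans ?_ hsum
    rw [integral_finsetSum _ fun i _ => hri i]
    refine Finset.sum_le_sum fun i _ => ?_
    rw [integral_finsetSum _ fun j _ => integrable_resid hm X lam i j]
    exact Finset.sum_le_sum fun j _ => integral_resid_le hm X lam i j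
  have hup : ∫ ω, sSup (S ω) ∂(tripleMeasure m n) ≤ K := by
    have h1 : ∫ ω, sSup (S ω) ∂(tripleMeasure m n)
        ≤ ∫ ω, ((∑ i, ∑ j, resid X lam i j (entry i j ω)) / K + K) / 2 ∂(tripleMeasure m n) :=
      integral_mono hint (((hrI.div_const K).add (integrable_const K)).div_const 2)
        fun ω => csSup_le ⟨_, hmem ω⟩ (hub ω)
    rw [integral_div, integral_add (hrI.div_const K) (integrable_const K), integral_div] at h1
    simp only [integral_const, probReal_univ, smul_eq_mul, one_mul] at h1
    have h2 : (∫ ω, ∑ i, ∑ j, resid X lam i j (entry i j ω) ∂(tripleMeasure m n)) / K ≤ K := by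
      rw [div_le_iff₀ hK]
      linarith [hsumI, sq K]
    linarith
  exact pow_le_pow_left₀ hlow hup 2

/-- bound on the squared width W²(Γ_X; Φ_{A,B}) for Gaussian A, B
(Lemma 6.1). -/
theorem width_bound_gaussian_AB :
    ∃ c : ℝ, 0 < c ∧ ∀ n m s : ℕ, 0 < n → 0 < m → 0 < s →
      ∀ X : Matrix (Fin n) (Fin n) ℝ, ColSparse s X →
        ∀ r : ℕ,
          r = ((Finset.univ : Finset (Fin n)).filter fun j => colNorm1 X j = mnorm1 X).card →
          (Wwidth m X)^2
              ≤ 1 + (n : ℝ)^2 - r * (n - s * (Real.log (c * n^2 * r))^2)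
            ∧ (r = n → (Wwidth m X)^2 ≤ 1 + (n : ℝ) * s * (Real.log (c * n^3))^2) := by
  refine ⟨Real.exp 6, Real.exp_pos 6, ?_⟩
  intro n m s hn hm hs X hX r hr
  have hmain : (Wwidth m X)^2
      ≤ 1 + (n : ℝ)^2 - r * (n - s * (Real.log (Real.exp 6 * n^2 * r))^2) := by
    have hrn : r ≤ n := by
      rw [hr]
      exact (Finset.card_filter_le _ _).trans (by simp)
    have hr0 : 0 < r := by
      have : Nonempty (Fin n) := ⟨⟨0, hn⟩⟩
      obtain ⟨j, hj⟩ := exists_eq_ciSup_of_finite (f := fun j => colNorm1 X j)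
      rw [hr]
      exact Finset.card_pos.2 ⟨j, Finset.mem_filter.2 ⟨Finset.mem_univ j, hj⟩⟩
    have hn' : (0 : ℝ) < n := by exact_mod_cast hn
    have hr' : (0 : ℝ) < r := by exact_mod_cast hr0
    have hrn' : (r : ℝ) ≤ n := by exact_mod_cast hrn
    have hlr : 0 ≤ Real.log r := Real.log_natCast_nonneg r
    have hlrn : Real.log r ≤ Real.log n := Real.log_le_log hr' hrn'
    have hL : Real.log (Real.exp 6 * n^2 * r) = 6 + 2 * Real.log n + Real.log r := by
      rw [Real.log_mul (by positivity) hr'.ne', Real.log_mul (by positivity) (by positivity),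
        Real.log_exp, Real.log_pow]
      norm_num
    set L := Real.log (Real.exp 6 * n^2 * r) with hLdef
    have hL6 : 6 ≤ L := by linarith
    -- The total excess over the threshold `L - 1` is at most `1`; this uses `r ≤ n`.
    have hq : (n : ℝ) * r * (27 / 2 * Real.exp (-(2 / 3) * (L - 1))) ≤ 1 := by
      have h1 : (n : ℝ) * r * Real.exp (-(2 / 3) * (L - 1)) ≤ Real.exp (-3) := by
        calc (n : ℝ) * r * Real.exp (-(2 / 3) * (L - 1))
            = Real.exp (Real.log n + Real.log r + -(2 / 3) * (L - 1)) := by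
              rw [Real.exp_add, Real.exp_add, Real.exp_log hn', Real.exp_log hr']
          _ ≤ Real.exp (-3) := by
              rw [Real.exp_le_exp, hL]
              linarith
      have h2 : Real.exp (-3) * (27 / 2) ≤ 1 := by
        have h3 : (27 / 2 : ℝ) ≤ Real.exp 3 := by
          have h4 := Real.exp_one_gt_d9
          have h5 : Real.exp 3 = Real.exp 1 ^ 3 := by rw [← Real.exp_nat_mul]; norm_num
          rw [h5]
          calc (27 / 2 : ℝ) ≤ 2.7 ^ 3 := by norm_num
            _ ≤ _ := pow_le_pow_left₀ (by norm_num) (by linarith) 3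
        rw [Real.exp_neg, inv_mul_le_iff₀ (Real.exp_pos 3)]
        linarith
      linarith
    have hrsL : (r : ℝ) * s * (1 + (L - 1) ^ 2) ≤ r * s * L ^ 2 :=
      mul_le_mul_of_nonneg_left (by nlinarith) (by positivity)
    have hsum := sum_residMean_le X hX hr (L - 1)
    have hpos : 0 < 1 + (n : ℝ)^2 - r * (n - s * L ^ 2) := by
      have h1 : (0 : ℝ) ≤ r * s * L ^ 2 := by positivity
      have h2 : (r : ℝ) * n ≤ n * n := mul_le_mul_of_nonneg_right hrn' hn'.le
      nlinarith
    have hw := width_sq_le hm X (lam := L - 1)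
      (K := √(1 + (n : ℝ)^2 - r * (n - s * L ^ 2))) (by linarith) (Real.sqrt_pos.2 hpos)
      (by rw [Real.sq_sqrt hpos.le]; linarith)
    rwa [Real.sq_sqrt hpos.le] at hw
  refine ⟨hmain, ?_⟩
  rintro rfl
  have h1 : Real.exp 6 * (r : ℝ) ^ 2 * r = Real.exp 6 * r ^ 3 := by ring
  rw [h1] at hmain
  linarith

end
end

section
/- Let a, b ∈ ℝ^n be independent random vectors with i.i.d. standard Gaussian N(0,1) entries and set M := a b^T. Then for every U ∈ ℝ^{n×n} with ‖U‖_F = 1, E[⟨M, U⟩²] = 1, and there exists an absolute constant c > 0 such that P[|⟨M, U⟩| ≥ 1/√2] ≥ c for every such U. -/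
/-!
Write `X = ⟨a bᵀ, U⟩`. For fixed `a`, `X` is a linear form in `b` with coefficient vector `Uᵀa`, hence
centred Gaussian with variance `|Uᵀa|²` (`map_linearForm`), and each coordinate of `Uᵀa` is in turn a
centred Gaussian whose variance is the squared norm of a column of `U`. Integrating over `b` and then
over `a` gives `E X² = ‖U‖_F² = 1` (`integral_chaos_sq`).

With `K` the fourth moment of a standard Gaussian, the same iteration gives
`E X⁴ = K E|Uᵀa|⁴`, and Cauchy–Schwarz weighted by the squared column norms yields `E|Uᵀa|⁴ ≤ K`, so
`E X⁴ ≤ K²` (`integral_chaos_pow_four_le`). The Paley–Zygmund argument (`paley_zygmund`) then bounds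
`P(X² ≥ 1/2)` below by the absolute constant `1 / (4K²)`.
-/

open scoped BigOperators
open scoped Classical

noncomputable section

open MeasureTheory ProbabilityTheory

/-- Joint law of a pair (a, b) of independent standard Gaussian vectors in ℝⁿ. -/
def pairGauss (n : ℕ) : Measure ((Fin n → ℝ) × (Fin n → ℝ)) :=
  (Measure.pi fun _ : Fin n => gaussianReal 0 1).prod
    (Measure.pi fun _ : Fin n => gaussianReal 0 1)

/-- The law of `(x_i)` with independent standard Gaussian coordinates. -/
local notation "γ" n => Measure.pi (fun _ : Fin n => gaussianReal 0 1)

lemma measurable_linearForm {n : ℕ} (c : Fin n → ℝ) :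
    Measurable (fun x : Fin n → ℝ => ∑ i, c i * x i) :=
  Finset.measurable_sum _ fun i _ => by fun_prop

/-- A linear form of a standard Gaussian vector is centred Gaussian with variance `∑ c_i²`
(compare characteristic functions). -/
lemma map_linearForm {n : ℕ} (c : Fin n → ℝ) :
    (γ n).map (fun x => ∑ i, c i * x i) = gaussianReal 0 (∑ i, c i ^ 2).toNNReal := by
  have hv : 0 ≤ ∑ i, c i ^ 2 := Finset.sum_nonneg fun i _ => sq_nonneg _
  apply Measure.ext_of_charFun
  ext t
  rw [charFun_apply_real, integral_map (measurable_linearForm c).aemeasurable (by fun_prop), charFun_gaussianReal]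
  have h : ∀ x : Fin n → ℝ,
      Complex.exp (t * ((∑ i, c i * x i : ℝ) : ℂ) * Complex.I)
        = ∏ i, Complex.exp (((t * c i : ℝ) : ℂ) * x i * Complex.I) := by
    intro x
    rw [← Complex.exp_sum]
    push_cast
    rw [Finset.mul_sum, Finset.sum_mul]
    exact congrArg _ (Finset.sum_congr rfl fun i _ => by ring)
  simp_rw [h]
  rw [integral_fintype_prod_eq_prod
    (f := fun i (x : ℝ) => Complex.exp (((t * c i : ℝ) : ℂ) * x * Complex.I))]
  simp_rw [← charFun_apply_real, charFun_gaussianReal]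
  rw [← Complex.exp_sum]
  congr 1
  have hc : (((∑ i, c i ^ 2).toNNReal : ℝ) : ℂ) = ∑ i, (c i : ℂ) ^ 2 := by
    rw [Real.coe_toNNReal _ hv]; push_cast; rfl
  rw [hc, Finset.sum_mul, Finset.sum_div]
  simp only [Complex.ofReal_zero, mul_zero, zero_mul, zero_sub, Finset.sum_neg_distrib]
  exact congrArg _ (Finset.sum_congr rfl fun i _ => by push_cast; ring)

/-- The fourth moment of the standard Gaussian; only its finiteness matters, not its value `3`. -/
def fourthMoment : ℝ := ∫ x, x ^ 4 ∂(gaussianReal 0 1)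

lemma integrable_pow_gaussian (k : ℕ) : Integrable (fun x : ℝ => x ^ k) (gaussianReal 0 1) := by
  have h := (memLp_id_gaussianReal (μ := 0) (v := 1) (k : NNReal))
  have h2 := (MemLp.integrable_norm_pow' (p := k) (by simpa using h))
  rw [← integrable_norm_iff (by fun_prop)]
  simpa using h2

lemma secondMoment_eq_one : ∫ x, x ^ 2 ∂(gaussianReal 0 1) = 1 := by
  have h := variance_id_gaussianReal (μ := 0) (v := 1)
  rw [variance_eq_integral (by fun_prop)] at h
  simpa using h

lemma integral_linearForm_pow {n : ℕ} (c : Fin n → ℝ) (k : ℕ) :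
    ∫ x, (∑ i, c i * x i) ^ k ∂(γ n)
      = Real.sqrt (∑ i, c i ^ 2) ^ k * ∫ x, x ^ k ∂(gaussianReal 0 1) := by
  have hv : 0 ≤ ∑ i, c i ^ 2 := Finset.sum_nonneg fun i _ => sq_nonneg _
  have h1 : ∫ x, (∑ i, c i * x i) ^ k ∂(γ n)
      = ∫ y, y ^ k ∂((γ n).map (fun x => ∑ i, c i * x i)) := by
    rw [integral_map (measurable_linearForm c).aemeasurable (by fun_prop)]
  have h2 : gaussianReal 0 (∑ i, c i ^ 2).toNNReal
      = (gaussianReal 0 1).map (Real.sqrt (∑ i, c i ^ 2) * ·) := by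
    rw [gaussianReal_map_const_mul]
    congr 1
    · simp
    · ext
      simp [Real.sq_sqrt hv, hv]
  rw [h1, map_linearForm, h2, integral_map (by fun_prop) (by fun_prop), ← integral_const_mul]
  simp_rw [mul_pow]

lemma integral_linearForm_sq {n : ℕ} (c : Fin n → ℝ) :
    ∫ x, (∑ i, c i * x i) ^ 2 ∂(γ n) = ∑ i, c i ^ 2 := by
  rw [integral_linearForm_pow, secondMoment_eq_one,
    Real.sq_sqrt (Finset.sum_nonneg fun i _ => sq_nonneg _), mul_one]

lemma integral_linearForm_pow_four {n : ℕ} (c : Fin n → ℝ) :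
    ∫ x, (∑ i, c i * x i) ^ 4 ∂(γ n) = (∑ i, c i ^ 2) ^ 2 * fourthMoment := by
  rw [integral_linearForm_pow, fourthMoment,
    show Real.sqrt (∑ i, c i ^ 2) ^ 4 = (Real.sqrt (∑ i, c i ^ 2) ^ 2) ^ 2 by ring,
    Real.sq_sqrt (Finset.sum_nonneg fun i _ => sq_nonneg _)]

lemma memLp_coord {n : ℕ} (i : Fin n) (k : ℕ) : MemLp (fun x : Fin n → ℝ => x i) k (γ n) := by
  have h := (memLp_id_gaussianReal (μ := 0) (v := 1) (k : NNReal))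
  exact (by simpa using h : MemLp id (k : ENNReal) (gaussianReal 0 1)).comp_measurePreserving
    (measurePreserving_eval (fun _ : Fin n => gaussianReal 0 1) i)

lemma integrable_linearForm_pow {n : ℕ} (c : Fin n → ℝ) (k : ℕ) :
    Integrable (fun x : Fin n → ℝ => (∑ i, c i * x i) ^ k) (γ n) := by
  have h : MemLp (fun x : Fin n → ℝ => ∑ i, c i * x i) k (γ n) :=
    memLp_finsetSum _ fun i _ => (memLp_coord i k).const_mul (c i)
  rw [← integrable_norm_iff ((measurable_linearForm c).pow_const k).aestronglyMeasurable]
  simpa using h.integrable_norm_pow'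

/-- The chaos `⟨a bᵀ, U⟩`, written as a linear form in `b` with coefficients `(Uᵀ a)_j`. -/
def chaos {n : ℕ} (U : Matrix (Fin n) (Fin n) ℝ) (ω : (Fin n → ℝ) × (Fin n → ℝ)) : ℝ :=
  ∑ j, (∑ i, U i j * ω.1 i) * ω.2 j

lemma minner_eq_chaos {n : ℕ} (U : Matrix (Fin n) (Fin n) ℝ) (ω : (Fin n → ℝ) × (Fin n → ℝ)) :
    minner (Matrix.of fun i j => ω.1 i * ω.2 j) U = chaos U ω := by
  unfold minner chaos
  rw [Finset.sum_comm]
  refine Finset.sum_congr rfl fun j _ => ?_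
  rw [Finset.sum_mul]
  exact Finset.sum_congr rfl fun i _ => by simp; ring

lemma sum_colSq_eq_one {n : ℕ} {U : Matrix (Fin n) (Fin n) ℝ} (hU : frob U = 1) :
    ∑ j, ∑ i, U i j ^ 2 = 1 := by
  rw [Finset.sum_comm]
  exact Real.sqrt_eq_one.mp hU

lemma measurable_chaos {n : ℕ} (U : Matrix (Fin n) (Fin n) ℝ) : Measurable (chaos U) := by
  unfold chaos; fun_prop

instance isProbabilityMeasure_pairGauss (n : ℕ) : IsProbabilityMeasure (pairGauss n) := by
  unfold pairGauss; infer_instance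

lemma integrable_chaos_pow {n : ℕ} (U : Matrix (Fin n) (Fin n) ℝ) (k : ℕ) :
    Integrable (fun ω => chaos U ω ^ k) (pairGauss n) := by
  have hterm : ∀ i j : Fin n,
      MemLp (fun ω : (Fin n → ℝ) × (Fin n → ℝ) => ω.1 i * ω.2 j) k (pairGauss n) := by
    intro i j
    -- Hölder with exponents `2k, 2k` gives a product in `L^k`.
    have h1 : MemLp (fun ω : (Fin n → ℝ) × (Fin n → ℝ) => ω.1 i) ((2 * k : ℕ) : ENNReal)
        (pairGauss n) := (memLp_coord i (2 * k)).comp_fst _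
    have h2 : MemLp (fun ω : (Fin n → ℝ) × (Fin n → ℝ) => ω.2 j) ((2 * k : ℕ) : ENNReal)
        (pairGauss n) := (memLp_coord j (2 * k)).comp_snd _
    have : ENNReal.HolderTriple ((2 * k : ℕ) : ENNReal) ((2 * k : ℕ) : ENNReal) k := by
      constructor
      push_cast
      rw [← two_mul, ENNReal.mul_inv (by simp) (by simp), ← mul_assoc,
        ENNReal.mul_inv_cancel (by simp) (by simp), one_mul]
    exact h2.mul h1
  have h : MemLp (chaos U) k (pairGauss n) := by
    have he : chaos U = fun ω => ∑ j, ∑ i, U i j * (ω.1 i * ω.2 j) := by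
      ext ω
      simp only [chaos, Finset.sum_mul, mul_assoc]
    rw [he]
    exact memLp_finsetSum _ fun j _ => memLp_finsetSum _ fun i _ => (hterm i j).const_mul _
  rw [← integrable_norm_iff ((measurable_chaos U).pow_const k).aestronglyMeasurable]
  simpa using h.integrable_norm_pow'

lemma integral_chaos_sq {n : ℕ} {U : Matrix (Fin n) (Fin n) ℝ} (hU : frob U = 1) :
    ∫ ω, chaos U ω ^ 2 ∂(pairGauss n) = 1 := by
  have hchaos := integrable_chaos_pow U 2
  unfold pairGauss at hchaos ⊢
  rw [integral_prod _ hchaos]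
  simp only [chaos, integral_linearForm_sq]
  rw [integral_finsetSum _ fun j _ => integrable_linearForm_pow (fun i => U i j) 2]
  simp only [integral_linearForm_sq]
  exact sum_colSq_eq_one hU

/-- Conditionally on `a`, the fourth moment is `|Uᵀa|⁴ * fourthMoment`. Cauchy–Schwarz with weights
the squared column norms of `U`, which sum to one, then bounds `E |Uᵀa|⁴`. -/
lemma integral_chaos_pow_four_le {n : ℕ} {U : Matrix (Fin n) (Fin n) ℝ} (hU : frob U = 1) :
    ∫ ω, chaos U ω ^ 4 ∂(pairGauss n) ≤ fourthMoment ^ 2 := by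
  have hK : 0 ≤ fourthMoment := integral_nonneg fun x => by positivity
  have hchaos := integrable_chaos_pow U 4
  set s : Fin n → ℝ := fun j => ∑ i, U i j ^ 2 with hs
  have hs0 : ∀ j, 0 ≤ s j := fun j => Finset.sum_nonneg fun i _ => sq_nonneg _
  have hs1 : ∑ j, s j = 1 := sum_colSq_eq_one hU
  have hCS : ∀ a : Fin n → ℝ,
      (∑ j, (∑ i, U i j * a i) ^ 2) ^ 2 ≤ ∑ j, (s j)⁻¹ * (∑ i, U i j * a i) ^ 4 := by
    intro a
    have h := Finset.sum_sq_le_sum_mul_sum_of_sq_le_mul Finset.univ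
      (r := fun j => (∑ i, U i j * a i) ^ 2) (f := s)
      (g := fun j => (s j)⁻¹ * (∑ i, U i j * a i) ^ 4) (fun j _ => hs0 j)
      (fun j _ => mul_nonneg (inv_nonneg.2 (hs0 j)) (by positivity)) ?_
    · rwa [hs1, one_mul] at h
    · intro j _
      apply le_of_eq
      by_cases hj : s j = 0
      · -- A zero column contributes `0` to both sides.
        have h0 : ∀ i, U i j = 0 := fun i => by
          have := (Finset.sum_eq_zero_iff_of_nonneg fun i _ => sq_nonneg (U i j)).1 hj i
            (Finset.mem_univ i)
          exact pow_eq_zero_iff two_ne_zero |>.1 this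
        simp [h0]
      · field_simp
  have hLint : ∀ j, Integrable (fun a : Fin n → ℝ => (s j)⁻¹ * (∑ i, U i j * a i) ^ 4) (γ n) :=
    fun j => (integrable_linearForm_pow (fun i => U i j) 4).const_mul _
  have hmain : ∫ a, (∑ j, (∑ i, U i j * a i) ^ 2) ^ 2 ∂(γ n) ≤ fourthMoment := by
    calc ∫ a, (∑ j, (∑ i, U i j * a i) ^ 2) ^ 2 ∂(γ n)
        ≤ ∫ a, ∑ j, (s j)⁻¹ * (∑ i, U i j * a i) ^ 4 ∂(γ n) :=
          integral_mono_of_nonneg (Filter.Eventually.of_forall fun a => by positivity)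
            (integrable_finsetSum _ fun j _ => hLint j) (Filter.Eventually.of_forall hCS)
      _ = ∑ j, (s j)⁻¹ * (s j ^ 2 * fourthMoment) := by
          rw [integral_finsetSum _ fun j _ => hLint j]
          simp only [integral_const_mul, integral_linearForm_pow_four, hs]
      _ = ∑ j, s j * fourthMoment := by
          refine Finset.sum_congr rfl fun j _ => ?_
          by_cases hj : s j = 0
          · simp [hj]
          · field_simp
      _ = fourthMoment := by rw [← Finset.sum_mul, hs1, one_mul]
  unfold pairGauss at hchaos ⊢
  rw [integral_prod _ hchaos]
  simp only [chaos, integral_linearForm_pow_four]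
  rw [integral_mul_const, sq fourthMoment]
  exact mul_le_mul_of_nonneg_right hmain hK

lemma fourthMoment_pos : 0 < fourthMoment := by
  -- `x² ≤ (x⁴ + 1) / 2` gives `1 ≤ (fourthMoment + 1) / 2`.
  have h : ∫ x, x ^ 2 ∂(gaussianReal 0 1) ≤ ∫ x : ℝ, (1 / 2 * x ^ 4 + 1 / 2) ∂(gaussianReal 0 1) :=
    integral_mono (integrable_pow_gaussian 2)
      (((integrable_pow_gaussian 4).const_mul _).add (integrable_const _))
      fun x => by nlinarith [sq_nonneg (x ^ 2 - 1)]
  rw [secondMoment_eq_one, integral_add ((integrable_pow_gaussian 4).const_mul _)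
    (integrable_const _), integral_const_mul] at h
  simp only [integral_const, probReal_univ, one_smul] at h
  change 1 ≤ 1 / 2 * fourthMoment + 1 / 2 at h
  linarith

/-- A Paley–Zygmund bound: with `E X² = 1` and `E X⁴ ≤ B`, `P(X² ≥ 1/2) ≥ 1 / (4B)`. -/
lemma paley_zygmund {Ω : Type*} [MeasurableSpace Ω] (μ : Measure Ω) [IsProbabilityMeasure μ]
    {X : Ω → ℝ} (hX : Measurable X) {B : ℝ} (hB : 0 < B)
    (h2i : Integrable (fun ω => X ω ^ 2) μ) (h4i : Integrable (fun ω => X ω ^ 4) μ)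
    (h2 : ∫ ω, X ω ^ 2 ∂μ = 1) (h4 : ∫ ω, X ω ^ 4 ∂μ ≤ B) :
    1 / (4 * B) ≤ μ.real {ω | 1 / 2 ≤ X ω ^ 2} := by
  set A : Set Ω := {ω | 1 / 2 ≤ X ω ^ 2} with hA
  have hAm : MeasurableSet A := measurableSet_le measurable_const (hX.pow_const 2)
  have hi : Integrable (A.indicator fun _ => B) μ := (integrable_const B).indicator hAm
  have hi4 : Integrable (fun ω => 1 / (4 * B) * X ω ^ 4) μ := h4i.const_mul _
  -- Off `A` the term `1/2` dominates; on `A`, AM-GM applied to `X⁴ / (4B)` and `B` does.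
  have hpt : ∀ ω, X ω ^ 2 ≤ (1 / 2 + 1 / (4 * B) * X ω ^ 4) + A.indicator (fun _ => B) ω := by
    intro ω
    have hq : 0 ≤ 1 / (4 * B) * X ω ^ 4 := by positivity
    by_cases hω : ω ∈ A
    · rw [Set.indicator_of_mem hω]
      have : 1 / (4 * B) * X ω ^ 4 + B - X ω ^ 2 = 1 / (4 * B) * (X ω ^ 2 - 2 * B) ^ 2 := by
        field_simp; ring
      have : 0 ≤ 1 / (4 * B) * (X ω ^ 2 - 2 * B) ^ 2 := by positivity
      linarith
    · rw [Set.indicator_of_notMem hω]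
      have : X ω ^ 2 < 1 / 2 := not_le.1 hω
      linarith
  have hi' : Integrable (fun ω => 1 / 2 + 1 / (4 * B) * X ω ^ 4) μ :=
    (integrable_const (1 / 2)).add hi4
  have h := integral_mono h2i (hi'.add hi) hpt
  simp only [Pi.add_apply] at h
  rw [h2, integral_add hi' hi,
    integral_add (integrable_const (1 / 2)) hi4, integral_const_mul,
    integral_indicator_const _ hAm] at h
  simp only [integral_const, probReal_univ, smul_eq_mul] at h
  have h5 : 1 / (4 * B) * ∫ ω, X ω ^ 4 ∂μ ≤ 1 / 4 := by
    calc _ ≤ 1 / (4 * B) * B := by gcongr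
      _ = 1 / 4 := by field_simp
  rw [div_le_iff₀ (by positivity)]
  linarith

/-- second moment identity and small-ball estimate for the Gaussian
rank-one chaos ⟨a bᵀ, U⟩ (Lemma 6.2). -/
theorem rank_one_gaussian_chaos :
    (∀ (n : ℕ) (U : Matrix (Fin n) (Fin n) ℝ), frob U = 1 →
        ∫ ω, (minner (Matrix.of fun i j => ω.1 i * ω.2 j) U)^2 ∂(pairGauss n) = 1)
    ∧ ∃ c : ℝ, 0 < c ∧
        ∀ (n : ℕ) (U : Matrix (Fin n) (Fin n) ℝ), frob U = 1 →
          ENNReal.ofReal c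
            ≤ pairGauss n
                {ω | 1 / Real.sqrt 2 ≤ |minner (Matrix.of fun i j => ω.1 i * ω.2 j) U|} := by
  simp only [minner_eq_chaos]
  have hK : 0 < fourthMoment ^ 2 := pow_pos fourthMoment_pos 2
  refine ⟨fun n U hU => integral_chaos_sq hU, 1 / (4 * fourthMoment ^ 2), by positivity,
    fun n U hU => ?_⟩
  have h := paley_zygmund (pairGauss n) (measurable_chaos U) hK (integrable_chaos_pow U 2)
    (integrable_chaos_pow U 4) (integral_chaos_sq hU) (integral_chaos_pow_four_le hU)
  have hset : {ω | 1 / Real.sqrt 2 ≤ |chaos U ω|} = {ω | 1 / 2 ≤ chaos U ω ^ 2} := by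
    ext ω
    have hsq : (1 / 2 : ℝ) = (1 / Real.sqrt 2) ^ 2 := by
      rw [div_pow, Real.sq_sqrt zero_le_two, one_pow]
    rw [Set.mem_ofPred_eq, Set.mem_ofPred_eq, hsq, ← sq_abs (chaos U ω),
      sq_le_sq₀ (by positivity) (abs_nonneg _)]
  rw [hset]
  exact ENNReal.ofReal_le_of_le_toReal h

end
end
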